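/- Let D = (V, E; c; s, t) be a flow network in which every arc belongs to at least one s-t path, and suppose that: (i) the directed graph (V, E) is acyclic; (ii) each bottleneck arc b ∈ B belongs to a unique s-t path; and (iii) each non-bottleneck arc e ∉ B satisfies c(e) ≥ Σ_{P ∈ 𝒫_e} c(P). Then for every coalition S ⊆ E, the characteristic function of the flow game satisfies γ(S) = Σ_{P ∈ 𝒫 : P ⊆ S} c(P), i.e., γ(S) is the sum of the capacities of all s-t paths fully contained in S. -/

import Mathlib

open scoped Classical
open Finset

noncomputable section

/-- The arcs (consecutive vertex pairs) of a vertex list. -/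
def arcsOf {V : Type*} [DecidableEq V] (vs : List V) : Finset (V × V) :=
  (vs.zip vs.tail).toFinset

/-- `vs` is the vertex list of a directed path from `a` to `b` using arcs of `E`,
with pairwise distinct vertices. -/
def IsPathList {V : Type*} (E : Finset (V × V)) (a b : V) (vs : List V) : Prop :=
  vs.Nodup ∧ vs.head? = some a ∧ vs.getLast? = some b ∧
    vs.Chain' (fun x y => (x, y) ∈ E)

/-- `P` is (the arc set of) an `s`-`t` path in the network with arc set `E`. -/
def IsSTPath {V : Type*} [DecidableEq V] (E : Finset (V × V)) (s t : V)
    (P : Finset (V × V)) : Prop :=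
  ∃ vs : List V, IsPathList E s t vs ∧ P = arcsOf vs

/-- The capacity of a path (arc set): the minimum capacity of its arcs. -/
def pathCap {V : Type*} (c : V × V → ℝ) (P : Finset (V × V)) : ℝ :=
  sInf (c '' (P : Set (V × V)))

/-- `e` is a bottleneck arc of some `s`-`t` path, i.e. `e ∈ B`. -/
def IsBottleneck {V : Type*} [DecidableEq V] (E : Finset (V × V)) (c : V × V → ℝ)
    (s t : V) (e : V × V) : Prop :=
  ∃ P : Finset (V × V), IsSTPath E s t P ∧ e ∈ P ∧ c e = pathCap c P

/-- The finite set `𝒫` of all `s`-`t` paths (as arc sets). -/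
def stPaths {V : Type*} [DecidableEq V] (E : Finset (V × V)) (s t : V) :
    Finset (Finset (V × V)) :=
  E.powerset.filter (fun P => IsSTPath E s t P)

/-- The value of a flow `f`: net flow out of the source `s`. -/
def flowValue {V : Type*} [DecidableEq V] (E : Finset (V × V)) (s : V)
    (f : V × V → ℝ) : ℝ :=
  ∑ e ∈ E.filter (fun e => e.1 = s), f e - ∑ e ∈ E.filter (fun e => e.2 = s), f e

/-- `f` is a feasible flow on the coalition `S`. -/
def IsFeasibleFlow {V : Type*} [DecidableEq V] (E : Finset (V × V)) (c : V × V → ℝ)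
    (s t : V) (S : Finset (V × V)) (f : V × V → ℝ) : Prop :=
  (∀ e ∈ E, 0 ≤ f e ∧ f e ≤ c e) ∧
  (∀ e, e ∉ S → f e = 0) ∧
  (∀ v, v ≠ s → v ≠ t →
    ∑ e ∈ E.filter (fun e => e.2 = v), f e = ∑ e ∈ E.filter (fun e => e.1 = v), f e)

/-- `γ` is the characteristic function of the flow game on `D = (V,E;c;s,t)`:
for each coalition `S ⊆ E`, `γ S` is the maximum value of a feasible flow on `S`. -/
def IsFlowGame {V : Type*} [DecidableEq V] (E : Finset (V × V)) (c : V × V → ℝ)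
    (s t : V) (γ : Finset (V × V) → ℝ) : Prop :=
  ∀ S : Finset (V × V), S ⊆ E →
    IsGreatest {x : ℝ | ∃ f, IsFeasibleFlow E c s t S f ∧ flowValue E s f = x} (γ S)

/-- The cooperative game `γ` with player set `E` is convex (supermodular). -/
def GameConvex {V : Type*} [DecidableEq V] (E : Finset (V × V))
    (γ : Finset (V × V) → ℝ) : Prop :=
  ∀ e ∈ E, ∀ S T : Finset (V × V), S ⊆ T → T ⊆ E.erase e →
    γ (insert e S) - γ S ≤ γ (insert e T) - γ T

/-- The directed graph with arc set `E` contains a directed cycle. -/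
def HasDirectedCycle {V : Type*} (E : Finset (V × V)) : Prop :=
  ∃ (v : V) (vs : List V), (v :: vs).Nodup ∧
    (v :: vs).Chain' (fun x y => (x, y) ∈ E) ∧
    ((v :: vs).getLast (List.cons_ne_nil v vs), v) ∈ E

/-!
No flow on `S` exceeds the sum of the path capacities: picking one bottleneck arc on each path
contained in `S` gives a set of arcs that separates `s` from `t` in `S`, and its capacity is at most
that sum. Conversely, sending `c(P)` along every such path `P` at once attains the sum, and
conditions (ii) and (iii) both say that an arc has room for all the paths through it: a bottleneck
arc carries a single path, whose capacity is at most its own.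
-/

section NetOutflow

/-! `flowValue E v f` is used at every vertex `v`, as the net flow out of `v`. -/

variable {V : Type*} [DecidableEq V] {E : Finset (V × V)} {c f : V × V → ℝ} {s t : V}
  {S : Finset (V × V)}

theorem flowValue_insert {e : V × V} (he : e ∉ E) (v : V) :
    flowValue (insert e E) v f =
      (if e.1 = v then f e else 0) - (if e.2 = v then f e else 0) + flowValue E v f := by
  simp only [flowValue, sum_filter, sum_insert he]
  ring

theorem sum_flowValue (R : Finset V) :
    ∑ v ∈ R, flowValue E v f = ∑ e ∈ E with e.1 ∈ R, f e - ∑ e ∈ E with e.2 ∈ R, f e := by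
  simp only [flowValue, sum_sub_distrib, sum_fiberwise_eq_sum_filter]

theorem IsFeasibleFlow.flowValue_eq_zero (hf : IsFeasibleFlow E c s t S f) {v : V}
    (hvs : v ≠ s) (hvt : v ≠ t) : flowValue E v f = 0 :=
  sub_eq_zero.2 (hf.2.2 v hvs hvt).symm

theorem IsFeasibleFlow.flowValue_le_sum_leaving (hf : IsFeasibleFlow E c s t S f)
    {R : Finset V} (hs : s ∈ R) (ht : t ∉ R) :
    flowValue E s f ≤ ∑ e ∈ E with e.1 ∈ R ∧ e.2 ∉ R, f e := by
  have inner_le_entering : ∑ e ∈ E with e.1 ∈ R ∧ e.2 ∈ R, f e ≤ ∑ e ∈ E with e.2 ∈ R, f e :=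
    sum_le_sum_of_subset_of_nonneg (monotone_filter_right E fun _ _ h ↦ h.2)
      fun e he _ ↦ (hf.1 e (mem_filter.1 he).1).1
  calc flowValue E s f
      = ∑ v ∈ R, flowValue E v f :=
        (sum_eq_single_of_mem s hs fun v hv hvs ↦
          hf.flowValue_eq_zero hvs (ne_of_mem_of_not_mem hv ht)).symm
    _ = ∑ e ∈ E with e.1 ∈ R, f e - ∑ e ∈ E with e.2 ∈ R, f e := sum_flowValue R
    _ = ∑ e ∈ E with e.1 ∈ R ∧ e.2 ∈ R, f e + ∑ e ∈ E with e.1 ∈ R ∧ e.2 ∉ R, f e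
          - ∑ e ∈ E with e.2 ∈ R, f e := by
        rw [← sum_filter_add_sum_filter_not (E.filter (·.1 ∈ R)) (·.2 ∈ R), filter_filter,
          filter_filter]
    _ ≤ ∑ e ∈ E with e.1 ∈ R ∧ e.2 ∉ R, f e := by linarith

end NetOutflow

section Paths

theorem IsPathList.exists_of_mem {V : Type*} {A : Finset (V × V)} {a b t : V} {vs : List V}
    (hvs : IsPathList A b t vs) (hab : (a, b) ∈ A) : ∃ ws, IsPathList A a t ws := by
  obtain ⟨hnodup, hhead, hlast, hchain⟩ := hvs
  by_cases ha : a ∈ vs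
  · obtain ⟨l₁, l₂, rfl⟩ := List.append_of_mem ha
    exact ⟨a :: l₂, hnodup.of_append_right, rfl, by simpa using hlast, hchain.right_of_append⟩
  · obtain ⟨l, rfl⟩ := List.head?_eq_some_iff.1 hhead
    exact ⟨a :: b :: l, hnodup.cons ha, rfl, by simpa using hlast, hchain.cons_cons hab⟩

variable {V : Type*} [DecidableEq V] {E A : Finset (V × V)} {P : Finset (V × V)} {s t : V}

theorem arcsOf_cons_cons (a b : V) (l : List V) :
    arcsOf (a :: b :: l) = insert (a, b) (arcsOf (b :: l)) := by
  simp [arcsOf]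

theorem fst_mem_of_mem_arcsOf {vs : List V} {e : V × V} (he : e ∈ arcsOf vs) : e.1 ∈ vs :=
  (List.of_mem_zip (List.mem_toFinset.1 he)).1

theorem arcsOf_subset_of_isChain {vs : List V} (h : vs.IsChain fun x y ↦ (x, y) ∈ E) :
    arcsOf vs ⊆ E := by
  induction h with
  | nil | singleton => simp [arcsOf]
  | cons_cons hab _ ih => rw [arcsOf_cons_cons]; exact insert_subset hab ih

theorem IsSTPath.subset (hP : IsSTPath E s t P) : P ⊆ E := by
  obtain ⟨vs, ⟨-, -, -, hchain⟩, rfl⟩ := hP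
  exact arcsOf_subset_of_isChain hchain

theorem IsSTPath.mono (hAE : A ⊆ E) (hP : IsSTPath A s t P) : IsSTPath E s t P := by
  obtain ⟨vs, ⟨hnodup, hhead, hlast, hchain⟩, rfl⟩ := hP
  exact ⟨vs, ⟨hnodup, hhead, hlast, hchain.imp fun _ _ h ↦ hAE h⟩, rfl⟩

theorem mem_stPaths : P ∈ stPaths E s t ↔ IsSTPath E s t P := by
  rw [stPaths, mem_filter, mem_powerset]
  exact and_iff_right_of_imp IsSTPath.subset

theorem exists_isSTPath_of_reflTransGen
    (h : Relation.ReflTransGen (fun x y ↦ (x, y) ∈ A) s t) : ∃ P, IsSTPath A s t P := by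
  suffices ∃ vs, IsPathList A s t vs from this.imp' arcsOf fun vs hvs ↦ ⟨vs, hvs, rfl⟩
  induction h using Relation.ReflTransGen.head_induction_on with
  | refl => exact ⟨[t], List.nodup_singleton t, rfl, rfl, List.isChain_singleton t⟩
  | head hab _ ih => exact ih.elim fun _ hvs ↦ hvs.exists_of_mem hab

theorem flowValue_const_arcsOf (x : ℝ) (v : V) {a b : V} {vs : List V} (hnodup : vs.Nodup)
    (hhead : vs.head? = some a) (hlast : vs.getLast? = some b) :
    flowValue (arcsOf vs) v (fun _ ↦ x) = (if a = v then x else 0) - (if b = v then x else 0) := by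
  induction vs generalizing a with
  | nil => simp at hhead
  | cons a' l ih =>
    obtain rfl : a' = a := by simpa using hhead
    cases l with
    | nil =>
      obtain rfl : a' = b := by simpa using hlast
      simp [flowValue, arcsOf]
    | cons y l =>
      rw [List.nodup_cons] at hnodup
      have hnew : (a', y) ∉ arcsOf (y :: l) := fun h ↦ hnodup.1 (fst_mem_of_mem_arcsOf h)
      rw [arcsOf_cons_cons, flowValue_insert hnew,
        ih hnodup.2 rfl (by simpa [List.getLast?_cons_cons] using hlast)]
      ring

theorem IsSTPath.flowValue_const (hP : IsSTPath E s t P) (x : ℝ) (v : V) :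
    flowValue P v (fun _ ↦ x) = (if s = v then x else 0) - (if t = v then x else 0) := by
  obtain ⟨vs, ⟨hnodup, hhead, hlast, -⟩, rfl⟩ := hP
  exact flowValue_const_arcsOf x v hnodup hhead hlast

theorem IsSTPath.nonempty (hP : IsSTPath E s t P) (hst : s ≠ t) : P.Nonempty := by
  rw [nonempty_iff_ne_empty]
  rintro rfl
  simpa [flowValue, hst.symm] using hP.flowValue_const 1 s

end Paths

section PathCapacity

variable {V : Type*} {c : V × V → ℝ} {P : Finset (V × V)}

theorem pathCap_le {e : V × V} (he : e ∈ P) : pathCap c P ≤ c e :=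
  csInf_le (P.finite_toSet.image c).bddBelow ⟨e, he, rfl⟩

theorem pathCap_nonneg (hc : ∀ e ∈ P, 0 ≤ c e) : 0 ≤ pathCap c P :=
  Real.sInf_nonneg (Set.forall_mem_image.2 hc)

theorem exists_mem_eq_pathCap (hP : P.Nonempty) : ∃ e ∈ P, c e = pathCap c P :=
  (hP.to_set.image c).csInf_mem (P.finite_toSet.image c)

end PathCapacity

section UpperBound

variable {V : Type*} [DecidableEq V] {E : Finset (V × V)} {c f : V × V → ℝ} {s t : V}
  {S : Finset (V × V)}

theorem exists_vertex_cut {A : Finset (V × V)} (E : Finset (V × V))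
    (hA : ∀ P, ¬ IsSTPath A s t P) :
    ∃ R : Finset V, s ∈ R ∧ t ∉ R ∧ ∀ e ∈ E, e.1 ∈ R → e.2 ∉ R → e ∉ A := by
  -- Cutting the reachable vertices down to `s` and the heads of `E` makes them finite for any `V`.
  refine ⟨(insert s (E.image Prod.snd)).filter (Relation.ReflTransGen (fun x y ↦ (x, y) ∈ A) s),
    mem_filter.2 ⟨mem_insert_self _ _, .refl⟩, fun ht ↦ ?_, fun e he hfst hsnd heA ↦ hsnd ?_⟩
  · obtain ⟨P, hP⟩ := exists_isSTPath_of_reflTransGen (mem_filter.1 ht).2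
    exact hA P hP
  · exact mem_filter.2 ⟨mem_insert_of_mem (mem_image_of_mem _ he), (mem_filter.1 hfst).2.tail heA⟩

theorem IsFeasibleFlow.flowValue_le_sum_of_not_disjoint (hf : IsFeasibleFlow E c s t S f)
    {C : Finset (V × V)} (hCE : C ⊆ E) (hC : ∀ P, IsSTPath S s t P → ¬ Disjoint P C) :
    flowValue E s f ≤ ∑ e ∈ C, c e := by
  obtain ⟨R, hs, ht, hR⟩ := exists_vertex_cut (A := S \ C) E fun P hP ↦
    hC P (hP.mono sdiff_subset) (disjoint_of_subset_left hP.subset sdiff_disjoint)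
  have leaving_support_subset : {e ∈ {e ∈ E | e.1 ∈ R ∧ e.2 ∉ R} | f e ≠ 0} ⊆ C := by
    intro e he
    simp only [mem_filter] at he
    obtain ⟨⟨heE, hfst, hsnd⟩, hfe⟩ := he
    by_contra heC
    exact hR e heE hfst hsnd (mem_sdiff.2 ⟨not_imp_comm.1 (hf.2.1 e) hfe, heC⟩)
  calc flowValue E s f
      ≤ ∑ e ∈ E with e.1 ∈ R ∧ e.2 ∉ R, f e := hf.flowValue_le_sum_leaving hs ht
    _ = ∑ e ∈ {e ∈ E | e.1 ∈ R ∧ e.2 ∉ R} with f e ≠ 0, f e := (sum_filter_ne_zero _).symm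
    _ ≤ ∑ e ∈ C, f e := sum_le_sum_of_subset_of_nonneg leaving_support_subset
        fun e he _ ↦ (hf.1 e (hCE he)).1
    _ ≤ ∑ e ∈ C, c e := sum_le_sum fun e he ↦ (hf.1 e (hCE he)).2

theorem IsFeasibleFlow.flowValue_le_sum_pathCap (hst : s ≠ t) (hS : S ⊆ E)
    (hf : IsFeasibleFlow E c s t S f) :
    flowValue E s f ≤ ∑ P ∈ stPaths E s t with P ⊆ S, pathCap c P := by
  set Q := {P ∈ stPaths E s t | P ⊆ S}
  have exists_bottleneck : ∀ P ∈ Q, ∃ e ∈ P, c e = pathCap c P := fun P hP ↦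
    exists_mem_eq_pathCap ((mem_stPaths.1 (mem_filter.1 hP).1).nonempty hst)
  have : Nonempty (V × V) := ⟨(s, t)⟩
  choose! b hbP hcb using exists_bottleneck
  have image_subset : Q.image b ⊆ E :=
    image_subset_iff.2 fun P hP ↦ hS ((mem_filter.1 hP).2 (hbP P hP))
  have meets_paths : ∀ P, IsSTPath S s t P → ¬ Disjoint P (Q.image b) := fun P hP ↦ by
    have hPQ : P ∈ Q := mem_filter.2 ⟨mem_stPaths.2 (hP.mono hS), hP.subset⟩
    exact not_disjoint_iff.2 ⟨b P, hbP P hPQ, mem_image_of_mem b hPQ⟩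
  calc flowValue E s f
      ≤ ∑ e ∈ Q.image b, c e := hf.flowValue_le_sum_of_not_disjoint image_subset meets_paths
    _ ≤ ∑ P ∈ Q, c (b P) := sum_image_le_of_nonneg fun e he ↦
        (hf.1 e (image_subset he)).1.trans (hf.1 e (image_subset he)).2
    _ = ∑ P ∈ Q, pathCap c P := sum_congr rfl hcb

end UpperBound

section PathFlow

variable {V : Type*} [DecidableEq V] {E S : Finset (V × V)} {c : V × V → ℝ} {s t : V}
  {Q : Finset (Finset (V × V))} {x : Finset (V × V) → ℝ}

/-- The superposition of path flows that sends the amount `x P` along each member `P` of the family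
`Q` of arc sets. -/
def pathFlow (Q : Finset (Finset (V × V))) (x : Finset (V × V) → ℝ) (e : V × V) : ℝ :=
  ∑ P ∈ Q with e ∈ P, x P

theorem pathFlow_nonneg (hx : ∀ P ∈ Q, 0 ≤ x P) (e : V × V) : 0 ≤ pathFlow Q x e :=
  sum_nonneg fun P hP ↦ hx P (mem_filter.1 hP).1

theorem pathFlow_le_of_subset {Q' : Finset (Finset (V × V))} (hQ : Q ⊆ Q')
    (hx : ∀ P ∈ Q', 0 ≤ x P) (e : V × V) : pathFlow Q x e ≤ pathFlow Q' x e :=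
  sum_le_sum_of_subset_of_nonneg (filter_subset_filter _ hQ) fun P hP _ ↦
    hx P (mem_filter.1 hP).1

theorem pathFlow_eq_zero (hQ : ∀ P ∈ Q, P ⊆ S) {e : V × V} (he : e ∉ S) : pathFlow Q x e = 0 := by
  rw [pathFlow, filter_eq_empty_iff.2 fun P hP heP ↦ he (hQ P hP heP), sum_empty]

theorem sum_filter_pathFlow (hQ : ∀ P ∈ Q, P ⊆ E) (p : V × V → Prop) [DecidablePred p] :
    ∑ e ∈ E with p e, pathFlow Q x e = ∑ P ∈ Q, ∑ e ∈ P with p e, x P := by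
  refine sum_comm' fun e P ↦ ?_
  simp only [mem_filter]
  exact ⟨fun ⟨⟨_, hpe⟩, hP, heP⟩ ↦ ⟨⟨heP, hpe⟩, hP⟩,
    fun ⟨⟨heP, hpe⟩, hP⟩ ↦ ⟨⟨hQ P hP heP, hpe⟩, hP, heP⟩⟩

theorem flowValue_pathFlow (hQ : ∀ P ∈ Q, IsSTPath E s t P) (v : V) :
    flowValue E v (pathFlow Q x) =
      ∑ P ∈ Q, ((if s = v then x P else 0) - (if t = v then x P else 0)) :=
  calc flowValue E v (pathFlow Q x)
      = ∑ P ∈ Q, flowValue P v (fun _ ↦ x P) := by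
        have hQE : ∀ P ∈ Q, P ⊆ E := fun P hP ↦ (hQ P hP).subset
        simp only [flowValue, sum_sub_distrib, sum_filter_pathFlow hQE]
    _ = ∑ P ∈ Q, ((if s = v then x P else 0) - (if t = v then x P else 0)) :=
        sum_congr rfl fun P hP ↦ (hQ P hP).flowValue_const (x P) v

theorem isFeasibleFlow_pathFlow (hQ : ∀ P ∈ Q, IsSTPath E s t P) (hQS : ∀ P ∈ Q, P ⊆ S)
    (hx : ∀ P ∈ Q, 0 ≤ x P) (hcap : ∀ e ∈ E, pathFlow Q x e ≤ c e) :
    IsFeasibleFlow E c s t S (pathFlow Q x) := by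
  refine ⟨fun e he ↦ ⟨pathFlow_nonneg hx e, hcap e he⟩, fun e ↦ pathFlow_eq_zero hQS,
    fun v hvs hvt ↦ (sub_eq_zero.1 (?_ : flowValue E v (pathFlow Q x) = 0)).symm⟩
  simpa [hvs.symm, hvt.symm] using flowValue_pathFlow (x := x) hQ v

theorem flowValue_source_pathFlow (hst : s ≠ t) (hQ : ∀ P ∈ Q, IsSTPath E s t P) :
    flowValue E s (pathFlow Q x) = ∑ P ∈ Q, x P := by
  simpa [hst.symm] using flowValue_pathFlow (x := x) hQ s

theorem pathFlow_stPaths_pathCap_le_of_existsUnique {e : V × V}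
    (he : ∃! P, IsSTPath E s t P ∧ e ∈ P) : pathFlow (stPaths E s t) (pathCap c) e ≤ c e := by
  obtain ⟨P, ⟨hP, heP⟩, hunique⟩ := he
  have filter_eq : {P' ∈ stPaths E s t | e ∈ P'} = {P} := by
    ext P'
    rw [mem_filter, mem_stPaths, mem_singleton]
    exact ⟨hunique P', fun h ↦ h ▸ ⟨hP, heP⟩⟩
  rw [pathFlow, filter_eq, sum_singleton]
  exact pathCap_le heP

end PathFlow

theorem gamma_decomposition_of_conditions_general {V : Type*} [DecidableEq V]
    {E : Finset (V × V)} {c : V × V → ℝ} {s t : V} (hst : s ≠ t) (hc : ∀ e ∈ E, 0 ≤ c e)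
    (hcap : ∀ e ∈ E, ∑ P ∈ stPaths E s t with e ∈ P, pathCap c P ≤ c e)
    {S : Finset (V × V)} (hS : S ⊆ E) :
    IsGreatest {x : ℝ | ∃ f, IsFeasibleFlow E c s t S f ∧ flowValue E s f = x}
      (∑ P ∈ stPaths E s t with P ⊆ S, pathCap c P) := by
  constructor
  · have cap_nonneg : ∀ P ∈ stPaths E s t, 0 ≤ pathCap c P := fun P hP ↦
      pathCap_nonneg fun e he ↦ hc e ((mem_stPaths.1 hP).subset he)
    have filter_sub : {P ∈ stPaths E s t | P ⊆ S} ⊆ stPaths E s t := filter_subset _ _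
    have isSTPath : ∀ P ∈ {P ∈ stPaths E s t | P ⊆ S}, IsSTPath E s t P := fun P hP ↦
      mem_stPaths.1 (filter_sub hP)
    exact ⟨pathFlow {P ∈ stPaths E s t | P ⊆ S} (pathCap c),
      isFeasibleFlow_pathFlow isSTPath (fun P hP ↦ (mem_filter.1 hP).2)
        (fun P hP ↦ cap_nonneg P (filter_sub hP))
        (fun e he ↦ (pathFlow_le_of_subset filter_sub cap_nonneg e).trans (hcap e he)),
      flowValue_source_pathFlow hst isSTPath⟩
  · rintro _ ⟨f, hf, rfl⟩
    exact hf.flowValue_le_sum_pathCap hst hS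

/-- Under acyclicity, bottleneck exclusivity, and non-bottleneck
sufficiency, the characteristic function of the flow game satisfies
`γ(S) = Σ_{P ∈ 𝒫 : P ⊆ S} c(P)` for every coalition `S ⊆ E`. -/
theorem gamma_decomposition_of_conditions
    {V : Type*} [Fintype V] [DecidableEq V]
    (E : Finset (V × V)) (c : V × V → ℝ) (s t : V) (γ : Finset (V × V) → ℝ)
    (hst : s ≠ t) (hc : ∀ e ∈ E, 0 < c e)
    (hγ : IsFlowGame E c s t γ)
    (hcover : ∀ e ∈ E, ∃ P : Finset (V × V), IsSTPath E s t P ∧ e ∈ P)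
    (hacyc : ¬ HasDirectedCycle E)
    (huniq : ∀ b : V × V, IsBottleneck E c s t b →
      ∃! P : Finset (V × V), IsSTPath E s t P ∧ b ∈ P)
    (hsuff : ∀ e ∈ E, ¬ IsBottleneck E c s t e →
      ∑ P ∈ (stPaths E s t).filter (fun P => e ∈ P), pathCap c P ≤ c e) :
    ∀ S : Finset (V × V), S ⊆ E →
      γ S = ∑ P ∈ (stPaths E s t).filter (fun P => P ⊆ S), pathCap c P := by
  have hcap : ∀ e ∈ E, pathFlow (stPaths E s t) (pathCap c) e ≤ c e := fun e he ↦
    (em (IsBottleneck E c s t e)).elim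
      (fun hB ↦ pathFlow_stPaths_pathCap_le_of_existsUnique (huniq e hB)) (hsuff e he)
  exact fun S hS ↦ (hγ S hS).unique
    (gamma_decomposition_of_conditions_general hst (fun e he ↦ (hc e he).le) hcap hS)
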